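/- arXiv:2012.04428 — 2 statements merged into one kernel-verified Lean document; each statement's English description precedes it below -/
import Mathlib

section
/- Fix N' ≥ 2. Suppose histograms γ_{n,n''} are given for all 1 ≤ n'' < N' and 0 ≤ n ≤ n'' (with the convention γ_{n,n''} := γ_{n'',n''} for n > n'') and satisfy the bound condition for every such n''. Define γ_{0,N'} := e^0 and γ_{n,N'} := γ_{n−1,N'−1} + dm(γ_{min(n,N'−1),N'−1}) for 1 ≤ n ≤ N'. Then γ_{·,N'} also satisfies the bound condition: (a) for every 1 ≤ n ≤ N' and every h ∈ RL(n, N'), H_a(h) ≼ γ_{n,N'}; and (b) n ≤ ñ ≤ N' implies γ_{n,N'} ≼ γ_{ñ,N'}. -/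
open scoped Classical

noncomputable section

/-- Tail sum `Σ_{j ≥ J} v j` of a finitely supported histogram `v : ℕ →₀ ℕ`. -/
def tailSum (v : ℕ →₀ ℕ) (J : ℕ) : ℕ :=
  ∑ j ∈ v.support.filter (fun j => J ≤ j), v j

/-- Order relation on histograms: `v ≼ w` iff every tail sum of `v` is at most that of `w`. -/
def HistLE (v w : ℕ →₀ ℕ) : Prop :=
  ∀ J : ℕ, tailSum v J ≤ tailSum w J

/-- Downward move: `dm v 0 = 0` and `dm v (i+1) = v i`. -/
def dm (v : ℕ →₀ ℕ) : ℕ →₀ ℕ :=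
  Finsupp.embDomain ⟨Nat.succ, Nat.succ_injective⟩ v

/-- Clipping `cl_k`: keeps values below `k`, puts the tail sum at `k`, zero above `k`. -/
def clip (k : ℕ) (v : ℕ →₀ ℕ) : ℕ →₀ ℕ :=
  Finsupp.onFinset (Finset.range (k + 1))
    (fun i => if i < k then v i else if i = k then tailSum v k else 0)
    (by
      intro a ha
      simp only [Finset.mem_range]
      by_contra hc
      push_neg at hc
      have h1 : ¬ a < k := by omega
      have h2 : a ≠ k := by omega
      simp [h1, h2] at ha)

/-- Activation pattern of a ReLU layer `h ∈ RL(n, n')` given by `W, b`. -/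
def layerPattern {n n' : ℕ} (W : Matrix (Fin n') (Fin n) ℝ) (b : Fin n' → ℝ)
    (x : Fin n → ℝ) : Fin n' → Bool :=
  fun j => decide (0 < W.mulVec x j + b j)

/-- `|s|₁`, the number of ones in a `Bool`-valued pattern. -/
def bweight {m : ℕ} (s : Fin m → Bool) : ℕ :=
  (Finset.univ.filter (fun j => s j = true)).card

/-- Activation histogram of a ReLU layer: `i ↦ #{achievable patterns s with |s|₁ = i}`. -/
def actHist {n n' : ℕ} (W : Matrix (Fin n') (Fin n) ℝ) (b : Fin n' → ℝ) : ℕ →₀ ℕ :=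
  Finsupp.onFinset (Finset.range (n' + 1))
    (fun i => (Finset.univ.filter (fun s : Fin n' → Bool =>
        (∃ x, layerPattern W b x = s) ∧ bweight s = i)).card)
    (by
      intro a ha
      simp only [Finset.mem_range]
      by_contra hc
      push_neg at hc
      apply ha
      rw [Finset.card_eq_zero, Finset.filter_eq_empty_iff]
      intro s _
      rintro ⟨-, rfl⟩
      have hle : bweight s ≤ n' :=
        le_trans (Finset.card_filter_le _ _) (by simp)
      omega)

theorem tailSum_eq (v : ℕ →₀ ℕ) (J : ℕ) :
    tailSum v J = v.sum (fun j c => if J ≤ j then c else 0) := by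
  unfold tailSum Finsupp.sum
  rw [Finset.sum_filter]

theorem tailSum_add (v w : ℕ →₀ ℕ) (J : ℕ) :
    tailSum (v + w) J = tailSum v J + tailSum w J := by
  simp only [tailSum_eq]
  apply Finsupp.sum_add_index'
  · intro a; simp
  · intro a b c; split_ifs <;> simp

theorem tailSum_dm (v : ℕ →₀ ℕ) (J : ℕ) : tailSum (dm v) J = tailSum v (J - 1) := by
  simp only [tailSum_eq]
  unfold dm
  rw [Finsupp.sum_embDomain]
  apply Finsupp.sum_congr
  intro x _
  simp only [Function.Embedding.coeFn_mk, Nat.succ_eq_add_one]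
  have : J ≤ x + 1 ↔ J - 1 ≤ x := by omega
  simp only [this]

theorem bweight_le {m : ℕ} (s : Fin m → Bool) : bweight s ≤ m :=
  le_trans (Finset.card_filter_le _ _) (by simp)

theorem tailSum_actHist {n m : ℕ} (W : Matrix (Fin m) (Fin n) ℝ) (b : Fin m → ℝ) (J : ℕ) :
    tailSum (actHist W b) J = (Finset.univ.filter (fun s : Fin m → Bool =>
        (∃ x, layerPattern W b x = s) ∧ J ≤ bweight s)).card := by
  rw [tailSum_eq, actHist, Finsupp.onFinset_sum]
  swap
  · intro a; simp
  rw [Finset.card_eq_sum_card_fiberwise (f := bweight) (t := Finset.range (m + 1))]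
  · apply Finset.sum_congr rfl
    intro i _
    split_ifs with h
    · congr 1
      ext s
      simp only [Finset.mem_filter, Finset.mem_univ, true_and]
      constructor
      · rintro ⟨h1, h2⟩; exact ⟨⟨h1, by omega⟩, h2⟩
      · rintro ⟨⟨h1, _⟩, h2⟩; exact ⟨h1, h2⟩
    · symm
      rw [Finset.card_eq_zero, Finset.filter_eq_empty_iff]
      intro s hs hh
      simp only [Finset.mem_filter, Finset.mem_univ, true_and] at hs
      omega
  · intro s _
    have := bweight_le s
    simp only [Finset.coe_range, Set.mem_Iio]
    omega

theorem bweight_succ {m : ℕ} (s : Fin (m + 1) → Bool) :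
    bweight s = (if s 0 = true then 1 else 0) + bweight (Fin.tail s) := by
  unfold bweight
  rw [Finset.card_filter, Finset.card_filter, Fin.sum_univ_succ]
  rfl

theorem hist_mono {n n2 m : ℕ} (W : Matrix (Fin m) (Fin n) ℝ) (b : Fin m → ℝ)
    (W2 : Matrix (Fin m) (Fin n2) ℝ) (b2 : Fin m → ℝ)
    (h : ∀ x, ∃ y, layerPattern W2 b2 y = layerPattern W b x) :
    HistLE (actHist W b) (actHist W2 b2) := by
  intro J
  rw [tailSum_actHist, tailSum_actHist]
  apply Finset.card_le_card
  intro s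
  simp only [Finset.mem_filter, Finset.mem_univ, true_and]
  rintro ⟨⟨x, rfl⟩, h2⟩
  exact ⟨h x, h2⟩

theorem card_split {m : ℕ} (A : Finset (Fin (m + 1) → Bool)) (P Q : Finset (Fin m → Bool))
    (hP : ∀ s ∈ A, Fin.tail s ∈ P)
    (hQ : ∀ s ∈ A, ∀ s2 ∈ A, s 0 = true → s2 0 = false → Fin.tail s = Fin.tail s2 →
      Fin.tail s ∈ Q) : A.card ≤ Q.card + P.card := by
  have inj : ∀ c : Bool, ((A.filter (fun s => s 0 = c)).image Fin.tail).card
      = (A.filter (fun s => s 0 = c)).card := by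
    intro c
    apply Finset.card_image_of_injOn
    intro s hs t ht hst
    simp only [Finset.coe_filter, Set.mem_ofPred_eq] at hs ht
    rw [← Fin.cons_self_tail s, ← Fin.cons_self_tail t, hst, hs.2, ht.2]
  have h1 : A.card = (A.filter (fun s => s 0 = true)).card
      + (A.filter (fun s => s 0 = false)).card := by
    rw [← Finset.card_filter_add_card_filter_not (s := A) (fun s => s 0 = true)]
    simp only [Bool.not_eq_true]
  rw [h1, ← inj, ← inj, ← Finset.card_union_add_card_inter, add_comm]
  apply Nat.add_le_add <;> apply Finset.card_le_card
  · intro t ht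
    simp only [Finset.mem_inter, Finset.mem_image, Finset.mem_filter] at ht
    obtain ⟨⟨s, ⟨hs, hs0⟩, rfl⟩, ⟨s2, ⟨hs2, hs20⟩, he⟩⟩ := ht
    exact hQ s hs s2 hs2 hs0 hs20 he.symm
  · intro t ht
    simp only [Finset.mem_union, Finset.mem_image, Finset.mem_filter] at ht
    rcases ht with ⟨s, ⟨hs, _⟩, rfl⟩ | ⟨s, ⟨hs, _⟩, rfl⟩ <;> exact hP s hs

theorem convex_point {n m : ℕ} (W : Matrix (Fin (m + 1)) (Fin n) ℝ) (b : Fin (m + 1) → ℝ)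
    (x y : Fin n → ℝ) (hx : layerPattern W b x 0 = true) (hy : layerPattern W b y 0 = false)
    (he : Fin.tail (layerPattern W b x) = Fin.tail (layerPattern W b y)) :
    ∃ z, W.mulVec z 0 + b 0 = 0 ∧
      Fin.tail (layerPattern W b z) = Fin.tail (layerPattern W b x) := by
  simp only [layerPattern, decide_eq_true_eq, decide_eq_false_iff_not, not_lt] at hx hy
  obtain ⟨t, ht0, ht1, ht⟩ : ∃ t : ℝ, 0 < t ∧ t ≤ 1 ∧
      (1 - t) * (W.mulVec x 0 + b 0) + t * (W.mulVec y 0 + b 0) = 0 := by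
    generalize W.mulVec x 0 + b 0 = a at *
    generalize W.mulVec y 0 + b 0 = c at *
    have hac : 0 < a - c := by linarith
    refine ⟨a / (a - c), div_pos hx hac, (div_le_one hac).2 (by linarith), ?_⟩
    field_simp
    ring
  have key : ∀ j, W.mulVec ((1 - t) • x + t • y) j + b j
      = (1 - t) * (W.mulVec x j + b j) + t * (W.mulVec y j + b j) := by
    intro j
    simp only [Matrix.mulVec_add, Matrix.mulVec_smul, Pi.add_apply, Pi.smul_apply, smul_eq_mul]
    ring
  refine ⟨(1 - t) • x + t • y, by rw [key, ht], ?_⟩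
  funext j
  have hj := congrFun he j
  simp only [Fin.tail, layerPattern, key, decide_eq_decide] at hj ⊢
  generalize W.mulVec x j.succ + b j.succ = a at *
  generalize W.mulVec y j.succ + b j.succ = c at *
  constructor
  · intro h
    by_contra ha
    have hc : ¬ 0 < c := fun h => ha (hj.2 h)
    nlinarith
  · intro h
    have hc := hj.1 h
    nlinarith

theorem hyper {n m : ℕ} (W : Matrix (Fin (m + 1)) (Fin (n + 1)) ℝ) (b : Fin (m + 1) → ℝ) :
    ∃ (W2 : Matrix (Fin m) (Fin n) ℝ) (b2 : Fin m → ℝ),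
      ∀ x y, layerPattern W b x 0 = true → layerPattern W b y 0 = false →
        Fin.tail (layerPattern W b x) = Fin.tail (layerPattern W b y) →
        ∃ z, layerPattern W2 b2 z = Fin.tail (layerPattern W b x) := by
  by_cases h0 : ∀ k, W 0 k = 0
  · refine ⟨0, 0, ?_⟩
    intro x y hx hy
    simp [layerPattern, Matrix.mulVec, dotProduct, h0] at hx hy
    linarith
  · push Not at h0
    obtain ⟨k, hk⟩ := h0
    refine ⟨fun j i => W j.succ (k.succAbove i) - W j.succ k * W 0 (k.succAbove i) / W 0 k,
      fun j => b j.succ - W j.succ k * b 0 / W 0 k, ?_⟩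
    intro x y hx hy he
    obtain ⟨z, hz, hze⟩ := convex_point W b x y hx hy he
    refine ⟨fun i => z (k.succAbove i), ?_⟩
    rw [← hze]
    funext j
    simp only [Fin.tail, layerPattern]
    congr 2
    simp only [Matrix.mulVec, dotProduct, Fin.sum_univ_succAbove _ k] at hz ⊢
    have e : ∀ i, (W j.succ (k.succAbove i) - W j.succ k * W 0 (k.succAbove i) / W 0 k)
        * z (k.succAbove i) = W j.succ (k.succAbove i) * z (k.succAbove i)
          - W j.succ k / W 0 k * (W 0 (k.succAbove i) * z (k.succAbove i)) := by
      intro i; ring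
    simp only [e, Finset.sum_sub_distrib, ← Finset.mul_sum]
    have e2 : ∑ i, W 0 (k.succAbove i) * z (k.succAbove i) = - b 0 - W 0 k * z k := by
      linarith
    rw [e2]
    field_simp
    ring

theorem main_split {n m : ℕ} (W : Matrix (Fin (m + 1)) (Fin (n + 1)) ℝ) (b : Fin (m + 1) → ℝ) :
    ∃ (W2 : Matrix (Fin m) (Fin n) ℝ) (b2 : Fin m → ℝ)
      (W3 : Matrix (Fin m) (Fin (n + 1)) ℝ) (b3 : Fin m → ℝ),
      HistLE (actHist W b) (actHist W2 b2 + dm (actHist W3 b3)) := by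
  obtain ⟨W2, b2, h2⟩ := hyper W b
  refine ⟨W2, b2, Matrix.of (fun j i => W j.succ i), fun j => b j.succ, ?_⟩
  intro J
  rw [tailSum_add, tailSum_dm, tailSum_actHist, tailSum_actHist, tailSum_actHist]
  apply card_split
  · intro s hs
    simp only [Finset.mem_filter, Finset.mem_univ, true_and] at hs ⊢
    obtain ⟨⟨x, rfl⟩, hJ⟩ := hs
    refine ⟨⟨x, rfl⟩, ?_⟩
    rw [bweight_succ] at hJ
    split_ifs at hJ <;> omega
  · intro s hs t ht hs0 ht0 he
    simp only [Finset.mem_filter, Finset.mem_univ, true_and] at hs ht ⊢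
    obtain ⟨⟨x, rfl⟩, hJ⟩ := hs
    obtain ⟨⟨y, rfl⟩, hJ2⟩ := ht
    refine ⟨h2 x y hs0 ht0 he, ?_⟩
    rw [bweight_succ, ht0, ← he] at hJ2
    simpa using hJ2

/-- Theorem 1, recursion step: if `γ_{·,n''}` satisfies the bound condition
for all `1 ≤ n'' < N'`, then the column defined by `γ_{0,N'} = e^0` and
`γ_{n,N'} = γ_{n-1,N'-1} + dm(γ_{min(n,N'-1),N'-1})` also satisfies the bound condition. -/
theorem statement2 (N' : ℕ) (hN' : 2 ≤ N')
    (γ : ℕ → ℕ → (ℕ →₀ ℕ))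
    (hconv : ∀ n'' : ℕ, 1 ≤ n'' → n'' < N' → ∀ n : ℕ, n'' < n → γ n n'' = γ n'' n'')
    (hbcA : ∀ n'' : ℕ, 1 ≤ n'' → n'' < N' → ∀ n : ℕ, n ≤ n'' →
      ∀ (W : Matrix (Fin n'') (Fin n) ℝ) (b : Fin n'' → ℝ),
        HistLE (actHist W b) (γ n n''))
    (hbcB : ∀ n'' : ℕ, 1 ≤ n'' → n'' < N' → ∀ n ntil : ℕ, n ≤ ntil → ntil ≤ n'' →
      HistLE (γ n n'') (γ ntil n''))
    (γN : ℕ → (ℕ →₀ ℕ))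
    (hγN0 : γN 0 = Finsupp.single 0 1)
    (hγNrec : ∀ n : ℕ, 1 ≤ n → n ≤ N' →
      γN n = γ (n - 1) (N' - 1) + dm (γ (min n (N' - 1)) (N' - 1))) :
    (∀ n : ℕ, 1 ≤ n → n ≤ N' →
      ∀ (W : Matrix (Fin N') (Fin n) ℝ) (b : Fin N' → ℝ),
        HistLE (actHist W b) (γN n)) ∧
    (∀ n ntil : ℕ, n ≤ ntil → ntil ≤ N' → HistLE (γN n) (γN ntil)) := by
  obtain ⟨m, rfl⟩ : ∃ m, N' = m + 1 := ⟨N' - 1, by omega⟩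
  have hm : 1 ≤ m := by omega
  simp only [Nat.add_sub_cancel] at hγNrec
  have hA : ∀ n : ℕ, 1 ≤ n → n ≤ m + 1 →
      ∀ (W : Matrix (Fin (m + 1)) (Fin n) ℝ) (b : Fin (m + 1) → ℝ),
        HistLE (actHist W b) (γN n) := by
    intro n hn hnm W b
    obtain ⟨k, rfl⟩ : ∃ k, n = k + 1 := ⟨n - 1, by omega⟩
    obtain ⟨W2, b2, W3, b3, h⟩ := main_split W b
    rw [hγNrec _ hn hnm]
    have h2 := hbcA m hm (by omega) k (by omega) W2 b2
    have h3 : HistLE (actHist W3 b3) (γ (min (k + 1) m) m) := by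
      by_cases hk : k + 1 ≤ m
      · rw [min_eq_left hk]
        exact hbcA m hm (by omega) _ hk W3 b3
      · rw [min_eq_right (by omega)]
        intro J
        refine le_trans (hist_mono W3 b3 (1 : Matrix (Fin m) (Fin m) ℝ) b3 ?_ J)
          (hbcA m hm (by omega) m le_rfl 1 b3 J)
        intro x
        refine ⟨W3.mulVec x, ?_⟩
        funext j
        simp only [layerPattern, Matrix.one_mulVec]
    intro J
    have a1 := h J
    have a2 := h2 J
    have a3 := h3 (J - 1)
    rw [tailSum_add, tailSum_dm] at a1 ⊢
    have e : k + 1 - 1 = k := rfl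
    rw [e]
    omega
  refine ⟨hA, ?_⟩
  intro n nt hle hnt J
  rcases Nat.eq_zero_or_pos nt with h0 | hpos
  · have : n = nt := by omega
    rw [this]
  rcases Nat.eq_zero_or_pos n with h0 | hnpos
  · subst h0
    rw [hγN0]
    have h1 : tailSum (Finsupp.single 0 1) J = if J ≤ 0 then 1 else 0 := by
      rw [tailSum_eq, Finsupp.sum_single_index (by simp)]
    rw [h1]
    split_ifs with hJ
    · refine le_trans ?_ (hA nt hpos hnt 0 0 J)
      rw [tailSum_actHist, Nat.succ_le_iff, Finset.card_pos]
      refine ⟨layerPattern (n := nt) 0 0 0, ?_⟩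
      simp only [Finset.mem_filter, Finset.mem_univ, true_and]
      exact ⟨⟨0, rfl⟩, by omega⟩
    · exact Nat.zero_le _
  · rw [hγNrec n hnpos (by omega), hγNrec nt hpos hnt]
    simp only [tailSum_add, tailSum_dm]
    exact Nat.add_le_add (hbcB m hm (by omega) _ _ (by omega) (by omega) J)
      (hbcB m hm (by omega) _ _ (by omega) (by omega) (J - 1))
end
end

section
/- Consider a ReLU network with scalar input (n_0 = 1), first layer given by w¹, b¹ ∈ ℝ^{n_1} with all w¹_j ≠ 0 and the breakpoints −b¹_j/w¹_j pairwise distinct, first-layer pattern s_1(x) ∈ {0,1}^{n_1} (s_1(x)_j = 1 iff w¹_j x + b¹_j > 0), and skip-augmented first-layer output g(x) = (σ(w¹ x + b¹), x) ∈ ℝ^{n_1+1}. For a second layer W² ∈ ℝ^{n_2×(n_1+1)}, b² ∈ ℝ^{n_2}, let s_2(x) ∈ {0,1}^{n_2} be defined by s_2(x)_j = 1 iff (W² g(x) + b²)_j > 0. Then the maximum over all (W², b²) of the number of achievable joint patterns #{(s_1(x), s_2(x)) : x ∈ ℝ} equals (n_1+1)(n_2+1): this count is at most (n_1+1)(n_2+1)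 for every (W², b²), and there exist W², b² attaining it. -/
open scoped Classical

noncomputable section

lemma pat_card (m : ℕ) (a c : Fin m → ℝ) :
    {p : Fin m → Bool | ∃ x : ℝ, (fun j => decide (0 < a j * x + c j)) = p}.ncard ≤ m + 1 := by
  induction m with
  | zero => exact (Set.ncard_le_one_of_subsingleton _)
  | succ m ih =>
    have ih' := ih (fun j => a j.succ) (fun j => c j.succ)
    set P : Set (Fin m → Bool) :=
      {p | ∃ x : ℝ, (fun j : Fin m => decide (0 < a j.succ * x + c j.succ)) = p} with hP
    set A : Set (Fin m → Bool) := {p | ∃ x : ℝ, 0 < a 0 * x + c 0 ∧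
      (fun j : Fin m => decide (0 < a j.succ * x + c j.succ)) = p} with hA
    set B : Set (Fin m → Bool) := {p | ∃ x : ℝ, ¬ 0 < a 0 * x + c 0 ∧
      (fun j : Fin m => decide (0 < a j.succ * x + c j.succ)) = p} with hB
    have hsub : {p : Fin (m+1) → Bool | ∃ x : ℝ, (fun j => decide (0 < a j * x + c j)) = p} ⊆
        ((fun p => (Fin.cons true p : Fin (m+1) → Bool)) '' A) ∪
        ((fun p => (Fin.cons false p : Fin (m+1) → Bool)) '' B) := by
      rintro p ⟨x, rfl⟩
      by_cases h : 0 < a 0 * x + c 0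
      · left
        refine ⟨_, ⟨x, h, rfl⟩, ?_⟩
        funext j
        refine Fin.cases ?_ (fun j => ?_) j
        · simp [h]
        · simp
      · right
        refine ⟨_, ⟨x, h, rfl⟩, ?_⟩
        funext j
        refine Fin.cases ?_ (fun j => ?_) j
        · simpa using h
        · simp
    have h1 := Set.ncard_le_ncard hsub (Set.toFinite _)
    have h2 := Set.ncard_union_le ((fun p => (Fin.cons true p : Fin (m+1) → Bool)) '' A)
      ((fun p => (Fin.cons false p : Fin (m+1) → Bool)) '' B)
    have h3 := Set.ncard_image_le (f := fun p => (Fin.cons true p : Fin (m+1) → Bool))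
      (Set.toFinite A)
    have h4 := Set.ncard_image_le (f := fun p => (Fin.cons false p : Fin (m+1) → Bool))
      (Set.toFinite B)
    have h5 := Set.ncard_union_add_ncard_inter A B (Set.toFinite _) (Set.toFinite _)
    have h6 : (A ∪ B).ncard ≤ P.ncard := by
      apply Set.ncard_le_ncard _ (Set.toFinite _)
      rintro p (⟨x, _, h⟩ | ⟨x, _, h⟩) <;> exact ⟨x, h⟩
    have key : ∀ u v x y z : ℝ, (0 < u * x + v ↔ 0 < u * y + v) → x ≤ z → z ≤ y →
        (0 < u * z + v ↔ 0 < u * x + v) := by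
      intro u v x y z h hx hy
      rcases le_total 0 u with hu | hu
      · have e1 := mul_le_mul_of_nonneg_left hx hu
        have e2 := mul_le_mul_of_nonneg_left hy hu
        constructor
        · intro hz; rw [h]; linarith
        · intro hz; linarith
      · have e1 := mul_le_mul_of_nonpos_left hx hu
        have e2 := mul_le_mul_of_nonpos_left hy hu
        constructor
        · intro hz; linarith
        · intro hz; rw [h] at hz; linarith
    -- two overlapping spans have equal patterns
    have hovr : ∀ x y x' y' : ℝ, x ≤ y → x' ≤ y' → x ≤ y' → x' ≤ y → ∀ p q : Fin m → Bool,
        (fun j : Fin m => decide (0 < a j.succ * x + c j.succ)) = p →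
        (fun j : Fin m => decide (0 < a j.succ * y + c j.succ)) = p →
        (fun j : Fin m => decide (0 < a j.succ * x' + c j.succ)) = q →
        (fun j : Fin m => decide (0 < a j.succ * y' + c j.succ)) = q → p = q := by
      intro x y x' y' h1 h2 h3 h4 p q e1 e2 e3 e4
      funext j
      have k1 := key (a j.succ) (c j.succ) x y (max x x')
        (by simpa using congrFun (e1.trans e2.symm) j) (le_max_left _ _) (max_le h1 h4)
      have k2 := key (a j.succ) (c j.succ) x' y' (max x x')
        (by simpa using congrFun (e3.trans e4.symm) j) (le_max_right _ _) (max_le h3 h2)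
      rw [← e1, ← e3]
      simp only [decide_eq_decide]
      rw [← k1, k2]
    have h7 : (A ∩ B).ncard ≤ 1 := by
      rw [Set.ncard_le_one (Set.toFinite _)]
      rintro p ⟨⟨y, hy, ey⟩, ⟨x, hx, ex⟩⟩ q ⟨⟨y', hy', ey'⟩, ⟨x', hx', ex'⟩⟩
      rcases le_total 0 (a 0) with hu | hu
      · have : ∀ r s : ℝ, ¬ 0 < a 0 * r + c 0 → 0 < a 0 * s + c 0 → r ≤ s := by
          intro r s hr hs
          by_contra hlt
          have := mul_le_mul_of_nonneg_left (not_le.1 hlt).le hu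
          apply hr; linarith
        exact hovr x y x' y' (this _ _ hx hy) (this _ _ hx' hy') (this _ _ hx hy')
          (this _ _ hx' hy) p q ex ey ex' ey'
      · have : ∀ r s : ℝ, ¬ 0 < a 0 * r + c 0 → 0 < a 0 * s + c 0 → s ≤ r := by
          intro r s hr hs
          by_contra hlt
          have := mul_le_mul_of_nonpos_left (not_le.1 hlt).le hu
          apply hr; linarith
        exact hovr y x y' x' (this _ _ hx hy) (this _ _ hx' hy') (this _ _ hx' hy)
          (this _ _ hx hy') p q ey ex ey' ex'
    omega

lemma zigzag (T : Finset ℝ) : ∀ u : ℝ, (∀ t ∈ T, t < u) →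
    ∃ (a c : ℝ) (κ : ℝ → ℝ) (X : Finset ℝ),
      |a * u + c + ∑ t ∈ T, κ t * max (u - t) 0| = 1 ∧ X.card = T.card + 1 ∧
      (∀ x ∈ X, x < u) ∧
      (∀ x ∈ X, ∀ x' ∈ X, x < x' → ∃ t ∈ T, x < t ∧ t < x') ∧
      (∀ x ∈ X, ∀ v : ℝ, |v| < 1 → ∃ y, y < u ∧ y ∉ T ∧ (∀ t ∈ T, t < x ↔ t < y) ∧
        a * y + c + ∑ t ∈ T, κ t * max (y - t) 0 = v) ∧ (∀ x ∈ X, x ∉ T) := by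
  induction T using Finset.induction_on_max with
  | empty =>
    intro u _
    refine ⟨1, 1 - u, 0, {u - 1}, by simp, by simp, by simp, ?_, ?_, by simp⟩
    · intro x hx x' hx' h
      simp at hx hx'; linarith
    · intro x hx v hv
      refine ⟨v + u - 1, by linarith [(abs_lt.1 hv).2], by simp, by simp, by simp⟩
  | insert t T hmax ih =>
    intro u hu
    obtain ⟨a, c, κ, X, h1, h2, h3, h4, h5, h6⟩ := ih t hmax
    have htT : t ∉ T := fun h => lt_irrefl _ (hmax t h)
    have htu : t < u := hu t (Finset.mem_insert_self _ _)
    set f : ℝ → ℝ := fun y => a * y + c + ∑ s ∈ T, κ s * max (y - s) 0 with hf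
    set k : ℝ := (- f t - f u) / (u - t) with hk
    have hne : u - t ≠ 0 := by linarith
    have hsum : ∀ y, a * y + c + ∑ s ∈ insert t T, (Function.update κ t k) s * max (y - s) 0
        = f y + k * max (y - t) 0 := by
      intro y
      rw [Finset.sum_insert htT]
      have : ∑ s ∈ T, (Function.update κ t k) s * max (y - s) 0 = ∑ s ∈ T, κ s * max (y - s) 0 := by
        refine Finset.sum_congr rfl fun s hs => ?_
        rw [Function.update_of_ne (by rintro rfl; exact htT hs)]
      rw [this]
      simp [hf]; ring
    have hgu : f u + k * max (u - t) 0 = - f t := by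
      rw [max_eq_left (by linarith), hk]; field_simp; ring
    have hft : |f t| = 1 := h1
    have hmX : (t + u) / 2 ∉ X := fun h => by have := h3 _ h; linarith
    refine ⟨a, c, Function.update κ t k, insert ((t + u) / 2) X, ?_, ?_, ?_, ?_, ?_, ?_⟩
    · rw [hsum, hgu, abs_neg]; exact hft
    · rw [Finset.card_insert_of_notMem hmX, Finset.card_insert_of_notMem htT, h2]
    · intro x hx
      rcases Finset.mem_insert.1 hx with rfl | hx
      · linarith
      · exact (h3 x hx).trans htu
    · intro x hx x' hx' hlt
      rcases Finset.mem_insert.1 hx with rfl | hx <;> rcases Finset.mem_insert.1 hx' with rfl | hx'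
      · exact absurd hlt (lt_irrefl _)
      · have := h3 _ hx'; linarith
      · exact ⟨t, Finset.mem_insert_self _ _, h3 x hx, by linarith⟩
      · obtain ⟨s, hs, h⟩ := h4 x hx x' hx' hlt
        exact ⟨s, Finset.mem_insert_of_mem hs, h⟩
    · intro x hx v hv
      simp only [hsum]
      rcases Finset.mem_insert.1 hx with rfl | hx
      · have hcont : Continuous (fun y => f y + k * max (y - t) 0) := by
          simp only [hf]; fun_prop
        have hv' := abs_lt.1 hv
        have hgt : f t + k * max (t - t) 0 = f t := by simp
        have : v ∈ (fun y => f y + k * max (y - t) 0) '' Set.Ioo t u := by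
          rcases eq_or_eq_neg_of_abs_eq hft with h | h
          · apply intermediate_value_Ioo' htu.le hcont.continuousOn
            simpa [hgu, h] using hv'
          · apply intermediate_value_Ioo htu.le hcont.continuousOn
            simpa [hgu, h] using hv'
        obtain ⟨y, hy, hyv⟩ := this
        refine ⟨y, hy.2, ?_, ?_, hyv⟩
        · intro hm
          rcases Finset.mem_insert.1 hm with h | h
          · exact hy.1.ne' h
          · exact lt_asymm hy.1 (hmax _ h)
        · intro s hs
          have hst : s ≤ t := by
            rcases Finset.mem_insert.1 hs with h | h
            · exact h.le
            · exact (hmax _ h).le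
          have := hy.1
          constructor <;> intro _ <;> linarith
      · obtain ⟨y, y1, y2, y3, y4⟩ := h5 x hx v hv
        have hxt := h3 x hx
        refine ⟨y, y1.trans htu, ?_, ?_, ?_⟩
        · intro hm
          rcases Finset.mem_insert.1 hm with h | h
          · exact y1.ne h
          · exact y2 h
        · intro s hs
          rcases Finset.mem_insert.1 hs with h | h
          · subst h
            constructor <;> intro _ <;> linarith
          · exact y3 s h
        · rw [max_eq_right (by linarith)]; simpa [hf] using y4
    · intro x hx hm
      rcases Finset.mem_insert.1 hx with rfl | hx
      · rcases Finset.mem_insert.1 hm with h | h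
        · linarith
        · have := hmax _ h; linarith
      · rcases Finset.mem_insert.1 hm with h | h
        · exact (h3 x hx).ne h
        · exact h6 x hx h

lemma relu_conv (w b : ℝ) (hw : w ≠ 0) : ∃ r e d : ℝ, ∀ x : ℝ,
    max (x - (-b / w)) 0 = r * max (w * x + b) 0 + e * x + d := by
  rcases lt_or_gt_of_ne hw with h | h
  · refine ⟨-1 / w, 1, b / w, fun x => ?_⟩
    have e : w * x + b = w * (x - (-b / w)) := by field_simp; ring
    rcases le_total (x - (-b / w)) 0 with h' | h'
    · rw [max_eq_right h', max_eq_left (by rw [e]; exact mul_nonneg_of_nonpos_of_nonpos h.le h')]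
      field_simp; ring
    · rw [max_eq_left h', max_eq_right (by rw [e]; exact mul_nonpos_of_nonpos_of_nonneg h.le h')]
      ring
  · refine ⟨1 / w, 0, 0, fun x => ?_⟩
    have e : w * x + b = w * (x - (-b / w)) := by field_simp; ring
    rcases le_total (x - (-b / w)) 0 with h' | h'
    · rw [max_eq_right h', max_eq_right (by rw [e]; exact mul_nonpos_of_nonneg_of_nonpos h.le h')]
      ring
    · rw [max_eq_left h', max_eq_left (by rw [e]; exact mul_nonneg h.le h')]
      field_simp; ring

lemma upper (n1 n2 : ℕ) (w1 b1 : Fin n1 → ℝ)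
    (W2 : Matrix (Fin n2) (Fin (n1 + 1)) ℝ) (b2 : Fin n2 → ℝ) :
      {t : (Fin n1 → Bool) × (Fin n2 → Bool) | ∃ x : ℝ,
          ((fun j => decide (0 < w1 j * x + b1 j)),
           (fun j => decide (0 <
              W2.mulVec (Fin.snoc (fun i => max (w1 i * x + b1 i) 0) x) j + b2 j))) =
            t}.ncard ≤ (n1 + 1) * (n2 + 1) := by
  set S := {t : (Fin n1 → Bool) × (Fin n2 → Bool) | ∃ x : ℝ,
          ((fun j => decide (0 < w1 j * x + b1 j)),
           (fun j => decide (0 <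
              W2.mulVec (Fin.snoc (fun i => max (w1 i * x + b1 i) 0) x) j + b2 j))) =
            t} with hS
  set P := {p : Fin n1 → Bool | ∃ x : ℝ, (fun j => decide (0 < w1 j * x + b1 j)) = p} with hP
  let al : (Fin n1 → Bool) → Fin n2 → ℝ := fun p j =>
    (∑ i : Fin n1, W2 j i.castSucc * (if p i then w1 i else 0)) + W2 j (Fin.last n1)
  let be : (Fin n1 → Bool) → Fin n2 → ℝ := fun p j =>
    (∑ i : Fin n1, W2 j i.castSucc * (if p i then b1 i else 0)) + b2 j
  let Q : (Fin n1 → Bool) → Set (Fin n2 → Bool) := fun p =>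
    {q | ∃ x : ℝ, (fun j => decide (0 < al p j * x + be p j)) = q}
  have hsub : S.toFinset ⊆ P.toFinset.biUnion (fun p => (Q p).toFinset.image (fun q => (p, q))) := by
    intro t ht
    rw [Set.mem_toFinset] at ht
    obtain ⟨x, rfl⟩ := ht
    rw [Finset.mem_biUnion]
    refine ⟨_, Set.mem_toFinset.2 ⟨x, rfl⟩, ?_⟩
    rw [Finset.mem_image]
    refine ⟨_, Set.mem_toFinset.2 ⟨x, rfl⟩, ?_⟩
    refine Prod.ext rfl ?_
    funext j
    simp only [decide_eq_decide]
    suffices h : al (fun j => decide (0 < w1 j * x + b1 j)) j * x +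
        be (fun j => decide (0 < w1 j * x + b1 j)) j =
        W2.mulVec (Fin.snoc (fun i => max (w1 i * x + b1 i) 0) x) j + b2 j by rw [h]
    simp only [al, be, Matrix.mulVec, dotProduct, Fin.sum_univ_castSucc, Fin.snoc_castSucc,
      Fin.snoc_last, add_mul, Finset.sum_mul]
    have : ∀ i : Fin n1, W2 j i.castSucc * max (w1 i * x + b1 i) 0 =
        W2 j i.castSucc * (if decide (0 < w1 i * x + b1 i) then w1 i else 0) * x +
        W2 j i.castSucc * (if decide (0 < w1 i * x + b1 i) then b1 i else 0) := by
      intro i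
      by_cases h : 0 < w1 i * x + b1 i
      · rw [max_eq_left h.le]; simp [h]; ring
      · rw [max_eq_right (not_lt.1 h)]; simp [h]
    rw [Finset.sum_congr rfl (fun i _ => this i), Finset.sum_add_distrib]
    ring
  have h1 := Finset.card_le_card hsub
  rw [Set.ncard_eq_toFinset_card' S]
  refine h1.trans ?_
  have hPc : P.toFinset.card ≤ n1 + 1 := by
    rw [← Set.ncard_eq_toFinset_card']; exact pat_card n1 w1 b1
  refine (Finset.card_biUnion_le_card_mul _ _ (n2 + 1) ?_).trans (Nat.mul_le_mul_right _ hPc)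
  intro p _
  refine Finset.card_image_le.trans ?_
  rw [← Set.ncard_eq_toFinset_card']
  exact pat_card n2 (al p) (be p)

lemma lower (n1 n2 : ℕ) (w1 b1 : Fin n1 → ℝ)
    (hw : ∀ j, w1 j ≠ 0)
    (hdist : Function.Injective (fun j => -(b1 j) / w1 j)) :
    ∃ (W2 : Matrix (Fin n2) (Fin (n1 + 1)) ℝ) (b2 : Fin n2 → ℝ),
      (n1 + 1) * (n2 + 1) ≤ {t : (Fin n1 → Bool) × (Fin n2 → Bool) | ∃ x : ℝ,
          ((fun j => decide (0 < w1 j * x + b1 j)),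
           (fun j => decide (0 <
              W2.mulVec (Fin.snoc (fun i => max (w1 i * x + b1 i) 0) x) j + b2 j))) =
            t}.ncard := by
  set T : Finset ℝ := Finset.univ.image (fun j => -(b1 j) / w1 j) with hT
  have hTc : T.card = n1 := by
    rw [hT, Finset.card_image_of_injective _ hdist]; simp
  obtain ⟨u, hu⟩ : ∃ u : ℝ, ∀ t ∈ T, t < u := by
    obtain ⟨M, hM⟩ := T.bddAbove
    exact ⟨M + 1, fun t ht => by have := hM ht; linarith⟩
  obtain ⟨a, c, κ, X, -, h2, -, h4, h5, h6⟩ := zigzag T u hu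
  choose r e d hr using fun i => relu_conv (w1 i) (b1 i) (hw i)
  set τ : Fin n1 → ℝ := fun j => -(b1 j) / w1 j with hτ
  let W2 : Matrix (Fin n2) (Fin (n1 + 1)) ℝ := fun _ =>
    Fin.snoc (fun i => κ (τ i) * r i) (a + ∑ i, κ (τ i) * e i)
  let b2 : Fin n2 → ℝ := fun j => c + ∑ i, κ (τ i) * d i - ((j : ℝ) + 1) / (n2 + 1)
  refine ⟨W2, b2, ?_⟩
  have hf : ∀ x j, W2.mulVec (Fin.snoc (fun i => max (w1 i * x + b1 i) 0) x) j + b2 j =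
      (a * x + c + ∑ t ∈ T, κ t * max (x - t) 0) - ((j : ℝ) + 1) / (n2 + 1) := by
    intro x j
    rw [hT, Finset.sum_image (fun _ _ _ _ h => hdist h)]
    simp only [W2, b2, Matrix.mulVec, dotProduct, Fin.sum_univ_castSucc, Fin.snoc_castSucc,
      Fin.snoc_last, add_mul, Finset.sum_mul]
    have : ∀ i, κ (τ i) * max (x - τ i) 0 = κ (τ i) * r i * max (w1 i * x + b1 i) 0 +
        κ (τ i) * e i * x + κ (τ i) * d i := by
      intro i; rw [hτ]; simp only; rw [hr i x]; ring
    rw [Finset.sum_congr rfl (fun i _ => this i), Finset.sum_add_distrib, Finset.sum_add_distrib]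
    ring
  have hn : (0 : ℝ) < n2 + 1 := by positivity
  have hv : ∀ k : Fin (n2 + 1), |((k : ℝ) + 1 / 2) / (n2 + 1)| < 1 := by
    intro k
    have hk : ((k : ℕ) : ℝ) ≤ n2 := by exact_mod_cast Nat.lt_succ_iff.1 k.2
    rw [abs_of_nonneg (by positivity), div_lt_one hn]
    linarith
  choose! Y hY1 hY2 hY3 hY4 using fun (x : ℝ) (hx : x ∈ X) (k : Fin (n2 + 1)) => h5 x hx _ (hv k)
  set F : ℝ → (Fin n1 → Bool) × (Fin n2 → Bool) := fun x =>
    ((fun j => decide (0 < w1 j * x + b1 j)),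
           (fun j => decide (0 <
              W2.mulVec (Fin.snoc (fun i => max (w1 i * x + b1 i) 0) x) j + b2 j))) with hF
  have hcard : ((X ×ˢ (Finset.univ : Finset (Fin (n2 + 1)))).card) = (n1 + 1) * (n2 + 1) := by
    rw [Finset.card_product, h2, hTc]; simp
  rw [← hcard, Set.ncard_eq_toFinset_card']
  have sgn : ∀ y y' i, y ∉ T → y' ∉ T → (0 < w1 i * y + b1 i ↔ 0 < w1 i * y' + b1 i) →
      (τ i < y ↔ τ i < y') := by
    intro y y' i hy hy' h
    have ey : ∀ z, w1 i * z + b1 i = w1 i * (z - τ i) := by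
      intro z; have := hw i; simp only [hτ]; field_simp; ring
    have hmem : τ i ∈ T := Finset.mem_image_of_mem _ (Finset.mem_univ i)
    have n1 : y - τ i ≠ 0 := fun h => hy (by rw [sub_eq_zero.1 h]; exact hmem)
    have n2 : y' - τ i ≠ 0 := fun h => hy' (by rw [sub_eq_zero.1 h]; exact hmem)
    rw [ey, ey] at h
    rw [← sub_pos, ← sub_pos (a := y')]
    rcases lt_or_gt_of_ne (hw i) with hi | hi
    · have q : ∀ z, 0 < w1 i * z ↔ z < 0 := fun z => by
        rw [← neg_mul_neg]
        rw [mul_pos_iff_of_pos_left (by linarith)]; simp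
      rw [q, q] at h
      constructor
      · intro hp; by_contra hc; exact absurd (h.2 (lt_of_le_of_ne (not_lt.1 hc) n2)) (by linarith)
      · intro hp; by_contra hc; exact absurd (h.1 (lt_of_le_of_ne (not_lt.1 hc) n1)) (by linarith)
    · rwa [mul_pos_iff_of_pos_left hi, mul_pos_iff_of_pos_left hi] at h
  apply Finset.card_le_card_of_injOn (fun q => F (Y q.1 q.2))
  · intro q _
    simp only [Finset.mem_coe, Set.mem_toFinset]
    exact ⟨_, rfl⟩
  · rintro ⟨x, k⟩ hx ⟨x', k'⟩ hx' heq
    have hx : x ∈ X := by simpa using hx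
    have hx' : x' ∈ X := by simpa using hx'
    simp only [hF, Prod.mk.injEq] at heq
    obtain ⟨e1, e2⟩ := heq
    have hsame : ∀ t ∈ T, (t < x ↔ t < x') := by
      intro t ht
      obtain ⟨i, -, rfl⟩ := Finset.mem_image.1 ht
      rw [hY3 x hx k _ ht, hY3 x' hx' k' _ ht]
      exact sgn _ _ i (hY2 x hx k) (hY2 x' hx' k') (by simpa using congrFun e1 i)
    have hxx : x = x' := by
      rcases lt_trichotomy x x' with h | h | h
      · obtain ⟨t, ht, l1, l2⟩ := h4 x hx x' hx' h
        exact absurd ((hsame t ht).2 l2) (by linarith)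
      · exact h
      · obtain ⟨t, ht, l1, l2⟩ := h4 x' hx' x hx h
        exact absurd ((hsame t ht).1 l2) (by linarith)
    have hk : ∀ j : Fin n2, ((j : ℕ) < k ↔ (j : ℕ) < k') := by
      have cmp : ∀ (j : Fin n2) (k : Fin (n2 + 1)),
          0 < ((k : ℝ) + 1 / 2) / (n2 + 1) - ((j : ℝ) + 1) / (n2 + 1) ↔ (j : ℕ) < k := by
        intro j k
        rw [← sub_div, div_pos_iff_of_pos_right hn]
        constructor
        · intro h
          by_contra hc
          have : ((k : ℕ) : ℝ) ≤ (j : ℕ) := by exact_mod_cast not_lt.1 hc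
          linarith
        · intro h
          have : ((j : ℕ) : ℝ) + 1 ≤ (k : ℕ) := by exact_mod_cast h
          linarith
      intro j
      have := congrFun e2 j
      simp only [decide_eq_decide] at this
      rw [hf, hf, hY4 x hx k, hY4 x' hx' k', cmp, cmp] at this
      exact this
    have hkk : k = k' := by
      apply Fin.ext
      rcases lt_trichotomy (k : ℕ) k' with h | h | h
      · have := (hk ⟨k, by have := k'.2; omega⟩).2 h
        simp at this
      · exact h
      · have := (hk ⟨k', by have := k.2; omega⟩).1 h
        simp at this
    rw [hxx, hkk]

/-- Proposition 9: for a scalar-input ReLU network with a skip-augmented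
first layer `g(x) = (σ(w¹x + b¹), x)`, the maximal number of achievable joint activation
patterns hovr choices of the second layer equals `(n₁+1)(n₂+1)`. -/
theorem statement15 (n1 n2 : ℕ) (w1 b1 : Fin n1 → ℝ)
    (hw : ∀ j, w1 j ≠ 0)
    (hdist : Function.Injective (fun j => -(b1 j) / w1 j)) :
    (∀ (W2 : Matrix (Fin n2) (Fin (n1 + 1)) ℝ) (b2 : Fin n2 → ℝ),
      {t : (Fin n1 → Bool) × (Fin n2 → Bool) | ∃ x : ℝ,
          ((fun j => decide (0 < w1 j * x + b1 j)),
           (fun j => decide (0 <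
              W2.mulVec (Fin.snoc (fun i => max (w1 i * x + b1 i) 0) x) j + b2 j))) =
            t}.ncard ≤ (n1 + 1) * (n2 + 1)) ∧
    (∃ (W2 : Matrix (Fin n2) (Fin (n1 + 1)) ℝ) (b2 : Fin n2 → ℝ),
      {t : (Fin n1 → Bool) × (Fin n2 → Bool) | ∃ x : ℝ,
          ((fun j => decide (0 < w1 j * x + b1 j)),
           (fun j => decide (0 <
              W2.mulVec (Fin.snoc (fun i => max (w1 i * x + b1 i) 0) x) j + b2 j))) =
            t}.ncard = (n1 + 1) * (n2 + 1)) := by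
  refine ⟨fun W2 b2 => upper n1 n2 w1 b1 W2 b2, ?_⟩
  obtain ⟨W2, b2, h⟩ := lower n1 n2 w1 b1 hw hdist
  exact ⟨W2, b2, le_antisymm (upper n1 n2 w1 b1 W2 b2) h⟩
end
end
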